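/- arXiv:2409.16963 — 3 statements merged into one kernel-verified Lean document; each statement's English description precedes it below -/
import Mathlib

section
/- Let β(x) = e^{-x} (the SNE case). Let Y(t) be a solution of the gradient flow of the relative entropy with Σ_{i=1}^n y_i(t) = 0 for all t, and set S(t) = Σ_{i=1}^n |y_i(t)|². Then there exist constants c > 0, C > 0 and C' > 0 (independent of t) such that for every t ≥ 0 with S(t) ≥ C', one has dS/dt (t) ≤ −c S(t) + C. -/
open Filter Topology

/-- The normalizing constant `Z = Σ_{k ≠ ℓ} β(|y_k - y_ℓ|²)`. -/
noncomputable def pairZ {E : Type*} [NormedAddCommGroup E] (β : ℝ → ℝ) {n : ℕ}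
    (Y : Fin n → E) : ℝ :=
  ∑ k : Fin n, ∑ l : Fin n, if k ≠ l then β (‖Y k - Y l‖ ^ 2) else 0

/-- The low-dimensional similarity `q_{ij}(Y) = β(|y_i - y_j|²) / Z(Y)`. -/
noncomputable def qfun {E : Type*} [NormedAddCommGroup E] (β : ℝ → ℝ) {n : ℕ}
    (Y : Fin n → E) (i j : Fin n) : ℝ :=
  β (‖Y i - Y j‖ ^ 2) / pairZ β Y

/-- The derivative `(log β)'` on `[0, ∞)`. -/
noncomputable def lbd (β : ℝ → ℝ) : ℝ → ℝ :=
  fun x => derivWithin (fun y => Real.log (β y)) (Set.Ici 0) x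

/-- `Y : ℝ → Fin n → E` is a solution of the gradient flow of the relative entropy:
`dy_i/dt = 4 Σ_{j ≠ i} (p_{ij} - q_{ij}(Y)) (y_i - y_j) (log β)'(|y_i - y_j|²)` for `t ≥ 0`. -/
def IsGradFlow {E : Type*} [NormedAddCommGroup E] [NormedSpace ℝ E] (β : ℝ → ℝ) {n : ℕ}
    (p : Fin n → Fin n → ℝ) (Y : ℝ → Fin n → E) : Prop :=
  ∀ i : Fin n, ∀ t ∈ Set.Ici (0 : ℝ),
    HasDerivWithinAt (fun u => Y u i)
      (∑ j ∈ Finset.univ.filter (· ≠ i),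
        (4 * (p i j - qfun β (Y t) i j) * lbd β (‖Y t i - Y t j‖ ^ 2)) • (Y t i - Y t j))
      (Set.Ici 0) t

/-- The diameter of the configuration `Y`, i.e. `max_{i,j} |y_i - y_j|`. -/
noncomputable def diamY {E : Type*} [NormedAddCommGroup E] {n : ℕ} (Y : Fin n → E) : ℝ :=
  Metric.diam (Set.range Y)

open Finset in
lemma aux_equidist {s n : ℕ} (hn : s + 1 < n) (Y : Fin n → EuclideanSpace ℝ (Fin s)) (m : ℝ)
    (hm : 0 < m) (h : ∀ i j, i ≠ j → ‖Y i - Y j‖ ^ 2 = m) : False := by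
  have hai : AffineIndependent ℝ Y := by
    rw [affineIndependent_iff]
    intro t w hw hsum
    have h1 := EuclideanGeometry.inner_weightedVSub (s₁ := t) (s₂ := t) (w₁ := w) (w₂ := w) Y hw Y hw
    rw [Finset.weightedVSub_eq_linear_combination _ hw, hsum, inner_zero_left] at h1
    have h2 : ∑ i ∈ t, ∑ j ∈ t, w i * w j * (dist (Y i) (Y j) * dist (Y i) (Y j))
        = - m * ∑ i ∈ t, w i ^ 2 := by
      have h3 : ∀ i ∈ t, ∑ j ∈ t, w i * w j * (dist (Y i) (Y j) * dist (Y i) (Y j))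
        = - m * w i ^ 2 := by
        intro i hi
        have : ∀ j ∈ t, w i * w j * (dist (Y i) (Y j) * dist (Y i) (Y j))
            = w i * m * w j - if i = j then m * w i ^ 2 else 0 := by
          intro j hj
          by_cases hij : i = j
          · subst hij; simp; ring
          · rw [dist_eq_norm, ← pow_two, h i j hij]; simp [hij]; ring
        rw [Finset.sum_congr rfl this, Finset.sum_sub_distrib, ← Finset.mul_sum, hw]
        simp [hi]
      rw [Finset.sum_congr rfl h3, ← Finset.mul_sum]
    rw [h2] at h1
    have h4 : ∑ i ∈ t, w i ^ 2 = 0 := by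
      have : m * ∑ i ∈ t, w i ^ 2 = 0 := by linarith
      rcases mul_eq_zero.1 this with h | h
      · linarith
      · exact h
    rw [Finset.sum_eq_zero_iff_of_nonneg (fun i _ => sq_nonneg _)] at h4
    intro i hi
    exact pow_eq_zero_iff (two_ne_zero) |>.1 (h4 i hi)
  have h5 := hai.card_le_finrank_succ
  have h6 := Submodule.finrank_le (vectorSpan ℝ (Set.range Y))
  simp at h5 h6
  omega

lemma aux_gap {s n : ℕ} (hn : s + 1 < n) :
    ∃ δ : ℝ, 0 < δ ∧ ∀ (Y : Fin n → EuclideanSpace ℝ (Fin s)) (m : ℝ), ∑ i, Y i = 0 →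
      0 ≤ m → (∀ i j, i ≠ j → m ≤ ‖Y i - Y j‖ ^ 2) → 0 < ∑ i, ‖Y i‖ ^ 2 →
      δ * ∑ i, ‖Y i‖ ^ 2 ≤ ∑ i, ∑ j, if i ≠ j then ‖Y i - Y j‖ ^ 2 - m else 0 := by
  let i0 : Fin n := ⟨0, by omega⟩
  let i1 : Fin n := ⟨1, by omega⟩
  have h01 : i0 ≠ i1 := by simp [i0, i1, Fin.ext_iff]
  let K : Set ((Fin n → EuclideanSpace ℝ (Fin s)) × ℝ) :=
    {x | ∑ i, x.1 i = 0 ∧ ∑ i, ‖x.1 i‖ ^ 2 = 1 ∧ 0 ≤ x.2 ∧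
      ∀ i j, i ≠ j → x.2 ≤ ‖x.1 i - x.1 j‖ ^ 2}
  have hK : IsCompact K := by
    refine Metric.isCompact_of_isClosed_isBounded ?_ ?_
    · refine IsClosed.inter (isClosed_eq (by fun_prop) (by fun_prop)) ?_
      refine IsClosed.inter (isClosed_eq (by fun_prop) (by fun_prop)) ?_
      refine IsClosed.inter (isClosed_le continuous_const continuous_snd) ?_
      have hc : IsClosed {x : (Fin n → EuclideanSpace ℝ (Fin s)) × ℝ |
          ∀ i j, i ≠ j → x.2 ≤ ‖x.1 i - x.1 j‖ ^ 2} := by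
        simp only [Set.ofPred_forall]
        refine isClosed_iInter fun i => isClosed_iInter fun j => isClosed_iInter fun _ => ?_
        exact isClosed_le (by fun_prop) (by fun_prop)
      exact hc
    · rw [Metric.isBounded_iff_subset_closedBall 0]
      refine ⟨4, ?_⟩
      rintro ⟨Y, m⟩ ⟨h1, h2, h3, h4⟩
      simp only at h1 h2 h3 h4
      have hb : ∀ i, ‖Y i‖ ≤ 1 := by
        intro i
        have := Finset.single_le_sum (f := fun i => ‖Y i‖ ^ 2) (fun i _ => sq_nonneg _)
          (Finset.mem_univ i)
        simp only [h2] at this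
        nlinarith [norm_nonneg (Y i)]
      rw [mem_closedBall_zero_iff, Prod.norm_def]
      refine max_le ?_ ?_
      · rw [pi_norm_le_iff_of_nonneg (by norm_num)]
        intro i; linarith [hb i]
      · rw [Real.norm_of_nonneg h3]
        have := h4 i0 i1 h01
        have h5 := norm_sub_le (Y i0) (Y i1)
        have h6 := hb i0
        have h7 := hb i1
        nlinarith [norm_nonneg (Y i0 - Y i1)]
  let f : (Fin n → EuclideanSpace ℝ (Fin s)) × ℝ → ℝ :=
    fun x => ∑ i, ∑ j, if i ≠ j then ‖x.1 i - x.1 j‖ ^ 2 - x.2 else 0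
  have hf : Continuous f := by
    refine continuous_finsetSum _ fun i _ => continuous_finsetSum _ fun j _ => ?_
    split_ifs <;> fun_prop
  have hpos : ∀ x ∈ K, 0 < f x := by
    rintro ⟨Y, m⟩ ⟨h1, h2, h3, h4⟩
    simp only at h1 h2 h3 h4
    have hnn : ∀ i j : Fin n, 0 ≤ if i ≠ j then ‖Y i - Y j‖ ^ 2 - m else 0 := by
      intro i j
      split_ifs with h
      · linarith [h4 i j h]
      · exact le_rfl
    refine lt_of_le_of_ne (Finset.sum_nonneg fun i _ => Finset.sum_nonneg fun j _ => hnn i j) ?_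
    intro h0
    have h0 := h0.symm
    simp only [f] at h0
    rw [Finset.sum_eq_zero_iff_of_nonneg (fun i _ => Finset.sum_nonneg fun j _ => hnn i j)] at h0
    have heq : ∀ i j, i ≠ j → ‖Y i - Y j‖ ^ 2 = m := by
      intro i j hij
      have := h0 i (Finset.mem_univ i)
      rw [Finset.sum_eq_zero_iff_of_nonneg (fun j _ => hnn i j)] at this
      have := this j (Finset.mem_univ j)
      rw [if_pos hij] at this
      linarith
    rcases h3.lt_or_eq with hm | hm
    · exact aux_equidist hn Y m hm heq
    · have hall : ∀ i, Y i = Y i0 := by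
        intro i
        by_cases hi : i = i0
        · rw [hi]
        · have := heq i i0 hi
          rw [← hm] at this
          exact sub_eq_zero.1 (norm_eq_zero.1 ((pow_eq_zero_iff two_ne_zero).1 this))
      have h5 : Y i0 = 0 := by
        simp only [hall] at h1
        rw [Finset.sum_const, Finset.card_univ, Fintype.card_fin, ← Nat.cast_smul_eq_nsmul ℝ] at h1
        rcases smul_eq_zero.1 h1 with h | h
        · have : n = 0 := by exact_mod_cast h
          omega
        · exact h
      simp [hall, h5] at h2
  obtain ⟨δ, hδ, hδ'⟩ := hK.exists_forall_le' hf.continuousOn hpos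
  refine ⟨δ, hδ, ?_⟩
  intro Y m hY hm hmin hS
  set S := ∑ i, ‖Y i‖ ^ 2 with hSdef
  have hr : 0 < Real.sqrt S := Real.sqrt_pos.2 hS
  have hr2 : (Real.sqrt S) ^ 2 = S := Real.sq_sqrt hS.le
  have hns : ∀ v : EuclideanSpace ℝ (Fin s), ‖(Real.sqrt S)⁻¹ • v‖ ^ 2 = ‖v‖ ^ 2 / S := by
    intro v
    rw [norm_smul, mul_pow, norm_inv, inv_pow, Real.norm_of_nonneg hr.le, hr2]
    field_simp
  have := hδ' (fun i => (Real.sqrt S)⁻¹ • Y i, m / S) ?_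
  · simp only [f] at this
    rw [← le_div_iff₀ hS, Finset.sum_div]
    refine this.trans (le_of_eq ?_)
    refine Finset.sum_congr rfl fun i _ => ?_
    rw [Finset.sum_div]
    refine Finset.sum_congr rfl fun j _ => ?_
    split_ifs
    · rw [← smul_sub, hns, sub_div]
    · simp
  · refine ⟨?_, ?_, by positivity, ?_⟩
    · simp only [← Finset.smul_sum, hY, smul_zero]
    · simp only [hns, ← Finset.sum_div]
      exact div_self hS.ne'
    · intro i j hij
      simp only
      rw [← smul_sub, hns]
      exact div_le_div_of_nonneg_right (hmin i j hij) hS.le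

lemma aux_symm {E : Type*} [NormedAddCommGroup E] [InnerProductSpace ℝ E] {n : ℕ}
    (a : Fin n → Fin n → ℝ) (ha : ∀ i j, a i j = a j i) (Y : Fin n → E) :
    ∑ i, 2 * inner ℝ (Y i) (∑ j ∈ Finset.univ.filter (· ≠ i), a i j • (Y i - Y j))
      = ∑ i, ∑ j, if i ≠ j then a i j * ‖Y i - Y j‖ ^ 2 else 0 := by
  have h1 : ∀ i, inner ℝ (Y i) (∑ j ∈ Finset.univ.filter (· ≠ i), a i j • (Y i - Y j))
      = ∑ j, a i j * inner ℝ (Y i) (Y i - Y j) := by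
    intro i
    rw [inner_sum, Finset.sum_filter]
    refine Finset.sum_congr rfl fun j _ => ?_
    by_cases h : j = i
    · simp [h]
    · simp [h, inner_smul_right]
  have h2 : ∑ i, ∑ j, a i j * inner ℝ (Y i) (Y i - Y j)
      = ∑ i, ∑ j, a i j * inner ℝ (Y j) (Y j - Y i) := by
    rw [Finset.sum_comm]
    refine Finset.sum_congr rfl fun i _ => Finset.sum_congr rfl fun j _ => ?_
    rw [ha]
  simp only [h1]
  rw [← Finset.mul_sum, two_mul]
  nth_rewrite 2 [h2]
  rw [← Finset.sum_add_distrib]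
  refine Finset.sum_congr rfl fun i _ => ?_
  rw [← Finset.sum_add_distrib]
  refine Finset.sum_congr rfl fun j _ => ?_
  by_cases h : i = j
  · simp [h]
  · rw [if_pos h, ← real_inner_self_eq_norm_sq]
    simp only [inner_sub_left, inner_sub_right]
    ring

lemma aux_lbd (x : ℝ) (hx : 0 ≤ x) : lbd (fun x => Real.exp (-x)) x = -1 := by
  have : HasDerivWithinAt (fun y : ℝ => Real.log (Real.exp (-y))) (-1) (Set.Ici 0) x := by
    simp only [Real.log_exp]
    exact (hasDerivAt_neg x).hasDerivWithinAt
  exact this.derivWithin (uniqueDiffOn_Ici 0 x hx)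

/-- **Inequality (3.7) (SNE case).** For `β(x) = e^{-x}` and a solution `Y(t)` of the
gradient flow with center of mass at the origin, setting `S(t) = Σ_i |y_i(t)|²`, there exist
constants `c, C, C' > 0` such that whenever `S(t) ≥ C'` one has `dS/dt ≤ -c S(t) + C`. -/
theorem dSdt_bound_sne
    (s n : ℕ) (hs : 1 ≤ s) (hn : s + 1 < n)
    (p : Fin n → Fin n → ℝ)
    (hsymm : ∀ i j, p i j = p j i)
    (hppos : ∀ i j, i ≠ j → 0 < p i j)
    (hpsum : (∑ i, ∑ j, if i ≠ j then p i j else (0 : ℝ)) = 1)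
    (β : ℝ → ℝ) (hβ : β = fun x => Real.exp (-x))
    (Y : ℝ → Fin n → EuclideanSpace ℝ (Fin s))
    (hflow : IsGradFlow β p Y)
    (hcm : ∀ t : ℝ, 0 ≤ t → ∑ i, Y t i = 0) :
    ∃ c C C' : ℝ, 0 < c ∧ 0 < C ∧ 0 < C' ∧
      ∀ t : ℝ, 0 ≤ t → C' ≤ ∑ i, ‖Y t i‖ ^ 2 →
        derivWithin (fun u => ∑ i, ‖Y u i‖ ^ 2) (Set.Ici 0) t
          ≤ -c * (∑ i, ‖Y t i‖ ^ 2) + C := by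
  subst hβ
  obtain ⟨δ, hδ, hgap⟩ := aux_gap hn
  have hne : (Finset.univ : Finset (Fin n)).offDiag.Nonempty := by
    refine ⟨(⟨0, by omega⟩, ⟨1, by omega⟩), ?_⟩
    simp [Fin.ext_iff]
  obtain ⟨⟨a, b⟩, hab, hpmin⟩ :=
    Finset.exists_min_image (Finset.univ : Finset (Fin n)).offDiag (fun e => p e.1 e.2) hne
  have hab' : a ≠ b := by simpa using hab
  have hpm := hppos a b hab'
  refine ⟨4 * p a b * δ, 4 * (n : ℝ) ^ 2 + 1, 1, by positivity, by positivity, one_pos, ?_⟩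
  intro t ht hS
  set β : ℝ → ℝ := fun x => Real.exp (-x) with hβ
  have hder : HasDerivWithinAt (fun u => ∑ i, ‖Y u i‖ ^ 2) _ (Set.Ici 0) t :=
    HasDerivWithinAt.fun_sum (u := Finset.univ) fun i _ => (hflow i t ht).norm_sq
  rw [hder.derivWithin (uniqueDiffOn_Ici 0 t ht)]
  have hqs : ∀ i j, qfun β (Y t) i j = qfun β (Y t) j i := by
    intro i j
    simp only [qfun, norm_sub_rev (Y t i) (Y t j)]
  rw [aux_symm (fun i j => 4 * (p i j - qfun β (Y t) i j) * lbd β (‖Y t i - Y t j‖ ^ 2))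
    (fun i j => by simp only [hqs i j, hsymm i j, norm_sub_rev (Y t i) (Y t j)])]
  obtain ⟨⟨k, l⟩, hkl, hmin⟩ :=
    Finset.exists_min_image (Finset.univ : Finset (Fin n)).offDiag
      (fun e => ‖Y t e.1 - Y t e.2‖ ^ 2) hne
  have hkl' : k ≠ l := by simpa using hkl
  set m := ‖Y t k - Y t l‖ ^ 2 with hm
  have hmin' : ∀ i j, i ≠ j → m ≤ ‖Y t i - Y t j‖ ^ 2 := by
    intro i j hij
    exact hmin (i, j) (by simpa using hij)
  have hg := hgap (Y t) m (hcm t ht) (sq_nonneg _) hmin' (by linarith)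
  set S := ∑ i, ‖Y t i‖ ^ 2 with hSdef
  have hZ : Real.exp (-m) ≤ pairZ β (Y t) := by
    have hnn : ∀ i j : Fin n, 0 ≤ if i ≠ j then β (‖Y t i - Y t j‖ ^ 2) else 0 := by
      intro i j; split_ifs
      · exact (Real.exp_pos _).le
      · exact le_rfl
    have e1 := Finset.single_le_sum
      (f := fun i => ∑ j, if i ≠ j then β (‖Y t i - Y t j‖ ^ 2) else 0)
      (fun i _ => Finset.sum_nonneg fun j _ => hnn i j) (Finset.mem_univ k)
    have e2 := Finset.single_le_sum
      (f := fun j => if k ≠ j then β (‖Y t k - Y t j‖ ^ 2) else 0)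
      (fun j _ => hnn k j) (Finset.mem_univ l)
    simp only [if_pos hkl'] at e2
    exact e2.trans e1
  have hZ0 : 0 < pairZ β (Y t) := (Real.exp_pos _).trans_le hZ
  have hqsum : (∑ i, ∑ j, if i ≠ j then qfun β (Y t) i j else (0 : ℝ)) = 1 := by
    rw [← div_self hZ0.ne']
    conv_rhs => enter [1]; rw [pairZ]
    rw [Finset.sum_div]
    refine Finset.sum_congr rfl fun i _ => ?_
    rw [Finset.sum_div]
    refine Finset.sum_congr rfl fun j _ => ?_
    split_ifs
    · rfl
    · simp
  have hterm : ∀ i j : Fin n,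
      (if i ≠ j then 4 * (p i j - qfun β (Y t) i j) * lbd β (‖Y t i - Y t j‖ ^ 2)
        * ‖Y t i - Y t j‖ ^ 2 else 0)
      ≤ -(4 * p a b) * (if i ≠ j then ‖Y t i - Y t j‖ ^ 2 - m else 0) + 4
        - 4 * m * (if i ≠ j then p i j else 0)
        + 4 * m * (if i ≠ j then qfun β (Y t) i j else 0) := by
    intro i j
    by_cases hij : i = j
    · simp [hij]
    · simp only [ne_eq, hij, not_false_eq_true, if_true]
      rw [aux_lbd _ (sq_nonneg _)]
      have hd := hmin' i j hij
      have hp := hpmin (i, j) (by simpa using hij)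
      simp only at hp
      have hq : qfun β (Y t) i j * (‖Y t i - Y t j‖ ^ 2 - m) ≤ 1 := by
        set d := ‖Y t i - Y t j‖ ^ 2
        have hq1 : qfun β (Y t) i j ≤ Real.exp (-(d - m)) := by
          rw [qfun, div_le_iff₀ hZ0]
          calc β d = Real.exp (-(d - m)) * Real.exp (-m) := by
                rw [← Real.exp_add]; simp only [hβ]; congr 1; ring
            _ ≤ _ := mul_le_mul_of_nonneg_left hZ (Real.exp_pos _).le
        have hx := Real.add_one_le_exp (d - m)
        calc _ ≤ Real.exp (-(d - m)) * (d - m) :=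
              mul_le_mul_of_nonneg_right hq1 (by linarith)
          _ ≤ Real.exp (-(d - m)) * Real.exp (d - m) :=
              mul_le_mul_of_nonneg_left (by linarith) (Real.exp_pos _).le
          _ = 1 := by rw [← Real.exp_add]; simp
      have := mul_le_mul_of_nonneg_right hp (sub_nonneg.2 hd)
      nlinarith
  have hsum := Finset.sum_le_sum fun i (_ : i ∈ (Finset.univ : Finset (Fin n))) =>
    Finset.sum_le_sum fun j (_ : j ∈ (Finset.univ : Finset (Fin n))) => hterm i j
  simp only [Finset.sum_add_distrib, Finset.sum_sub_distrib, ← Finset.mul_sum, hpsum, hqsum,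
    Finset.sum_const, Finset.card_univ, Fintype.card_fin, nsmul_eq_mul] at hsum
  have := mul_le_mul_of_nonneg_left hg hpm.le
  refine hsum.trans ?_
  nlinarith
end

section
/- Let Y(t) be a solution of the gradient flow of the relative entropy. If p_{1j} = p_{2j} for all j > 2 and y_1(0) = y_2(0), then y_1(t) = y_2(t) for all t ≥ 0. -/
open Filter Topology

/-- `w ↦ φ(|w|²) w` is Lipschitz on balls when `φ` is `C¹` on `[0, ∞)`. -/
lemma radial_lipschitz {E : Type*} [NormedAddCommGroup E] [NormedSpace ℝ E] (φ : ℝ → ℝ)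
    (hφ : ContDiffOn ℝ 1 φ (Set.Ici 0)) (R : ℝ) (hR : 0 ≤ R) :
    ∃ K : ℝ, 0 ≤ K ∧ ∀ v w : E, ‖v‖ ≤ R → ‖w‖ ≤ R →
      ‖φ (‖v‖ ^ 2) • v - φ (‖w‖ ^ 2) • w‖ ≤ K * ‖v - w‖ := by
  have hφ' : ContDiffOn ℝ 1 φ (Set.Icc 0 (R ^ 2)) := hφ.mono Set.Icc_subset_Ici_self
  obtain ⟨L, hL⟩ := hφ'.exists_lipschitzOnWith one_ne_zero (convex_Icc _ _) isCompact_Icc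
  obtain ⟨A, hA⟩ := isCompact_Icc.exists_bound_of_continuousOn hφ'.continuousOn
  have hA0 : 0 ≤ A := (norm_nonneg _).trans (hA 0 ⟨le_rfl, by positivity⟩)
  refine ⟨A + L * (2 * R) * R, by positivity, fun v w hv hw => ?_⟩
  have mv : ‖v‖ ^ 2 ∈ Set.Icc 0 (R ^ 2) := ⟨by positivity, by gcongr⟩
  have mw : ‖w‖ ^ 2 ∈ Set.Icc 0 (R ^ 2) := ⟨by positivity, by gcongr⟩
  have h1 := hL.dist_le_mul _ mv _ mw
  rw [dist_eq_norm, dist_eq_norm] at h1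
  have h2 : ‖‖v‖ ^ 2 - ‖w‖ ^ 2‖ ≤ 2 * R * ‖v - w‖ := by
    have : ‖v‖ ^ 2 - ‖w‖ ^ 2 = (‖v‖ + ‖w‖) * (‖v‖ - ‖w‖) := by ring
    rw [this, norm_mul, Real.norm_eq_abs, Real.norm_eq_abs, abs_of_nonneg (by positivity)]
    exact mul_le_mul (by linarith) (abs_norm_sub_norm_le v w) (abs_nonneg _) (by positivity)
  have h3 : φ (‖v‖ ^ 2) • v - φ (‖w‖ ^ 2) • w
      = φ (‖v‖ ^ 2) • (v - w) + (φ (‖v‖ ^ 2) - φ (‖w‖ ^ 2)) • w := by module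
  rw [h3]
  calc _ ≤ ‖φ (‖v‖ ^ 2) • (v - w)‖ + ‖(φ (‖v‖ ^ 2) - φ (‖w‖ ^ 2)) • w‖ := norm_add_le _ _
    _ = ‖φ (‖v‖ ^ 2)‖ * ‖v - w‖ + ‖φ (‖v‖ ^ 2) - φ (‖w‖ ^ 2)‖ * ‖w‖ := by
        rw [norm_smul, norm_smul]
    _ ≤ A * ‖v - w‖ + (L * (2 * R * ‖v - w‖)) * R := by
        gcongr
        · exact hA _ mv
        · exact h1.trans (by gcongr)
    _ = _ := by ring

/-- **Proof of Theorem 1.5 (first step).** If `p_{1j} = p_{2j}` for all `j > 2` and the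
first two points coincide initially, then they coincide for all time. -/
theorem coinciding_points_remain_equal
    (s n : ℕ) (hs : 1 ≤ s) (hn : s + 1 < n)
    (p : Fin n → Fin n → ℝ)
    (hsymm : ∀ i j, p i j = p j i)
    (hppos : ∀ i j, i ≠ j → 0 < p i j)
    (hpsum : (∑ i, ∑ j, if i ≠ j then p i j else (0 : ℝ)) = 1)
    (β : ℝ → ℝ)
    (hβpos : ∀ x, 0 ≤ x → 0 < β x)
    (hβsmooth : ContDiffOn ℝ (⊤ : ℕ∞) β (Set.Ici 0))
    (hβanti : AntitoneOn β (Set.Ici 0))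
    (hβbdd : ∃ M : ℝ, ∀ x, 0 ≤ x → |lbd β x| ≤ M)
    (Y : ℝ → Fin n → EuclideanSpace ℝ (Fin s))
    (hflow : IsGradFlow β p Y)
    -- `p_{1j} = p_{2j}` for all `j > 2` (indices `0`, `1` in 0-based numbering)
    (hp12 : ∀ j : Fin n, 1 < (j : ℕ) → p ⟨0, by omega⟩ j = p ⟨1, by omega⟩ j)
    -- `y_1 = y_2` initially
    (hinit : Y 0 ⟨0, by omega⟩ = Y 0 ⟨1, by omega⟩) :
    ∀ t : ℝ, 0 ≤ t → Y t ⟨0, by omega⟩ = Y t ⟨1, by omega⟩ := by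
  obtain ⟨i0, hi0⟩ : ∃ i : Fin n, i = ⟨0, by omega⟩ := ⟨_, rfl⟩
  obtain ⟨i1, hi1⟩ : ∃ i : Fin n, i = ⟨1, by omega⟩ := ⟨_, rfl⟩
  simp only [← hi0, ← hi1] at hp12 hinit ⊢
  intro T hT
  have hcont : ∀ i, ContinuousOn (fun u => Y u i) (Set.Icc 0 T) := fun i t ht =>
    ((hflow i t ht.1).continuousWithinAt).mono Set.Icc_subset_Ici_self
  have hYc : ContinuousOn Y (Set.Icc 0 T) := continuousOn_pi.2 hcont
  obtain ⟨R0, hR0⟩ := isCompact_Icc.exists_bound_of_continuousOn hYc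
  have hR00 : 0 ≤ R0 := (norm_nonneg _).trans (hR0 0 ⟨le_rfl, hT⟩)
  have hR : ∀ t ∈ Set.Icc 0 T, ∀ i j, ‖Y t i - Y t j‖ ≤ 2 * R0 := by
    intro t ht i j
    have h1 := (norm_le_pi_norm (Y t) i).trans (hR0 t ht)
    have h2 := (norm_le_pi_norm (Y t) j).trans (hR0 t ht)
    linarith [norm_sub_le (Y t i) (Y t j)]
  have hZpos : ∀ t, 0 < pairZ β (Y t) := by
    intro t
    have hnn : ∀ k l : Fin n, 0 ≤ (if k ≠ l then β (‖Y t k - Y t l‖ ^ 2) else 0) := by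
      intro k l
      split_ifs
      · exact (hβpos _ (by positivity)).le
      · exact le_rfl
    have h01 : i0 ≠ i1 := by rw [hi0, hi1]; simp
    unfold pairZ
    refine Finset.sum_pos' (fun k _ => Finset.sum_nonneg fun l _ => hnn k l)
      ⟨i0, Finset.mem_univ _, Finset.sum_pos' (fun l _ => hnn i0 l) ⟨i1, Finset.mem_univ _, ?_⟩⟩
    rw [if_pos h01]
    exact hβpos _ (by positivity)
  have hZc : ContinuousOn (fun t => (pairZ β (Y t))⁻¹) (Set.Icc 0 T) := by
    refine ContinuousOn.inv₀ ?_ (fun t _ => (hZpos t).ne')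
    unfold pairZ
    refine continuousOn_finsetSum _ fun k _ => continuousOn_finsetSum _ fun l _ => ?_
    split_ifs
    · exact hβsmooth.continuousOn.comp (((hcont k).sub (hcont l)).norm.pow 2)
        (fun t _ => by simp only [Set.mem_Ici]; positivity)
    · exact continuousOn_const
  obtain ⟨ζ, hζ⟩ := isCompact_Icc.exists_bound_of_continuousOn hZc
  have hζ0 : 0 ≤ ζ := (norm_nonneg _).trans (hζ 0 ⟨le_rfl, hT⟩)
  have hlbd : ContDiffOn ℝ 1 (lbd β) (Set.Ici 0) := by
    have h2 : ContDiffOn ℝ (⊤ : ℕ∞) (fun y => Real.log (β y)) (Set.Ici 0) :=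
      hβsmooth.log (fun x hx => (hβpos x hx).ne')
    exact h2.derivWithin (uniqueDiffOn_Ici 0)
      (show (((1 + 1 : ℕ∞)) : WithTop ℕ∞) ≤ ((⊤ : ℕ∞) : WithTop ℕ∞) from WithTop.coe_le_coe.2 le_top)
  have hβ1 : ContDiffOn ℝ 1 β (Set.Ici 0) := hβsmooth.of_le (by exact_mod_cast le_top)
  obtain ⟨K1, hK1, h1⟩ := radial_lipschitz (E := EuclideanSpace ℝ (Fin s)) (lbd β) hlbd
    (2 * R0) (by positivity)
  obtain ⟨K2, hK2, h2⟩ := radial_lipschitz (E := EuclideanSpace ℝ (Fin s))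
    (fun x => β x * lbd β x) (hβ1.mul hlbd) (2 * R0) (by positivity)
  obtain ⟨A, hA⟩ : ∃ A : ℝ, ∀ i j, |p i j| ≤ A := by
    refine ⟨∑ i, ∑ j, |p i j|, fun i j => ?_⟩
    calc |p i j| ≤ ∑ j, |p i j| :=
          Finset.single_le_sum (f := fun j => |p i j|) (fun _ _ => abs_nonneg _)
            (Finset.mem_univ j)
      _ ≤ _ := Finset.single_le_sum (f := fun i => ∑ j, |p i j|)
            (fun _ _ => Finset.sum_nonneg fun _ _ => abs_nonneg _) (Finset.mem_univ i)
  have hA0 : 0 ≤ A := (abs_nonneg _).trans (hA i0 i1)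
  -- the pair interaction
  let G : ℝ → ℝ → EuclideanSpace ℝ (Fin s) → EuclideanSpace ℝ (Fin s) := fun t a w =>
    (4 * (a - β (‖w‖ ^ 2) / pairZ β (Y t)) * lbd β (‖w‖ ^ 2)) • w
  have hG0 : ∀ t a, G t a 0 = 0 := fun t a => by simp [G]
  have hGL : ∀ t ∈ Set.Icc 0 T, ∀ a, |a| ≤ A → ∀ v w, ‖v‖ ≤ 2 * R0 → ‖w‖ ≤ 2 * R0 →
      ‖G t a v - G t a w‖ ≤ (4 * A * K1 + 4 * ζ * K2) * ‖v - w‖ := by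
    intro t ht a ha v w hv hw
    have e : G t a v - G t a w
        = (4 * a) • (lbd β (‖v‖ ^ 2) • v - lbd β (‖w‖ ^ 2) • w)
          - (4 * (pairZ β (Y t))⁻¹) • ((β (‖v‖ ^ 2) * lbd β (‖v‖ ^ 2)) • v
            - (β (‖w‖ ^ 2) * lbd β (‖w‖ ^ 2)) • w) := by
      simp only [G, div_eq_mul_inv]
      module
    rw [e]
    refine (norm_sub_le _ _).trans ?_
    rw [norm_smul, norm_smul, norm_mul, norm_mul, Real.norm_eq_abs a]
    have n4 : ‖(4 : ℝ)‖ = 4 := by norm_num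
    rw [n4]
    calc _ ≤ 4 * A * (K1 * ‖v - w‖) + 4 * ζ * (K2 * ‖v - w‖) := by
          gcongr
          · exact h1 v w hv hw
          · exact hζ t ht
          · exact h2 v w hv hw
      _ = _ := by ring
  have hsum : ∀ i t, (∑ j ∈ Finset.univ.filter (· ≠ i),
        (4 * (p i j - qfun β (Y t) i j) * lbd β (‖Y t i - Y t j‖ ^ 2)) • (Y t i - Y t j))
        = ∑ j, G t (p i j) (Y t i - Y t j) := by
    intro i t
    rw [Finset.sum_filter]
    refine Finset.sum_congr rfl fun j _ => ?_
    by_cases hj : j = i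
    · subst hj
      simp [hG0]
    · rw [if_pos hj]
      rfl
  have hdiff := eq_zero_of_abs_deriv_le_mul_abs_self_of_eq_zero_right
    (f := fun t => Y t i0 - Y t i1)
    (f' := fun t => (∑ j, G t (p i0 j) (Y t i0 - Y t j)) - ∑ j, G t (p i1 j) (Y t i1 - Y t j))
    (K := n * (4 * A * K1 + 4 * ζ * K2)) (a := 0) (b := T)
    ((hcont i0).sub (hcont i1))
    (fun t ht => by
      have d0 := hflow i0 t ht.1
      have d1 := hflow i1 t ht.1
      rw [hsum] at d0 d1
      exact (d0.sub d1).mono (Set.Ici_subset_Ici.2 ht.1))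
    (sub_eq_zero.2 hinit) ?_
  · exact sub_eq_zero.1 (hdiff T ⟨hT, le_rfl⟩)
  · intro t ht
    have ht' : t ∈ Set.Icc 0 T := ⟨ht.1, ht.2.le⟩
    have h00 : ‖(0 : EuclideanSpace ℝ (Fin s))‖ ≤ 2 * R0 := by rw [norm_zero]; positivity
    rw [← Finset.sum_sub_distrib]
    have hterm : ∀ j ∈ (Finset.univ : Finset (Fin n)),
        ‖G t (p i0 j) (Y t i0 - Y t j) - G t (p i1 j) (Y t i1 - Y t j)‖
        ≤ (4 * A * K1 + 4 * ζ * K2) * ‖Y t i0 - Y t i1‖ := by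
      intro j _
      by_cases hj0 : j = i0
      · subst hj0
        rw [sub_self, hG0, ← hG0 t (p i1 j)]
        refine (hGL t ht' _ (hA _ _) _ _ h00 (hR t ht' _ _)).trans_eq ?_
        rw [zero_sub, neg_sub]
      by_cases hj1 : j = i1
      · subst hj1
        rw [sub_self (Y t j), hG0, ← hG0 t (p i0 j)]
        refine (hGL t ht' _ (hA _ _) _ _ (hR t ht' _ _) h00).trans_eq ?_
        rw [sub_zero]
      have hj : 1 < (j : ℕ) := by
        have a0 : (j : ℕ) ≠ 0 := fun h => hj0 (by rw [hi0]; exact Fin.ext h)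
        have a1 : (j : ℕ) ≠ 1 := fun h => hj1 (by rw [hi1]; exact Fin.ext h)
        omega
      rw [hp12 j hj]
      refine (hGL t ht' _ (hA _ _) _ _ (hR t ht' _ _) (hR t ht' _ _)).trans_eq ?_
      rw [sub_sub_sub_cancel_right]
    refine (norm_sum_le_of_le _ hterm).trans_eq ?_
    rw [Finset.sum_const, Finset.card_univ, Fintype.card_fin, nsmul_eq_mul]
    ring
end

section
/- Let n = 4, s = 2, β(x) = (1+x)^{-1}, and fix a ∈ (1/10, 1/8). Define p_{12} = p_{23} = p_{34} = p_{14} = a and p_{13} = p_{24} = (1 − 8a)/4 (extended symmetrically, p_{ij} = p_{ji}). Let X_0 > 0 and let Y(t) be the solution of the gradient flow of the relative entropy with initial data y_1(0) = (X_0, 0), y_2(0) = (0, X_0), y_3(0) = (−X_0, 0), y_4(0) = (0, −X_0). Then there exists a constant c > 0 such that diam Y(t) ≥ c t^{1/4} for all t ≥ 0. -/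
open Filter Topology

/-- The right hand side of the gradient flow for the kernel `(1+x)⁻¹`. -/
noncomputable def flowField (p : Fin 4 → Fin 4 → ℝ) (Y : Fin 4 → EuclideanSpace ℝ (Fin 2)) :
    Fin 4 → EuclideanSpace ℝ (Fin 2) := fun i =>
  ∑ j ∈ Finset.univ.filter (· ≠ i),
    (4 * (p i j - qfun (fun x => (1 + x)⁻¹) Y i j) * (-(1 + ‖Y i - Y j‖ ^ 2)⁻¹)) • (Y i - Y j)

lemma lbd_kernel (x : ℝ) (hx : 0 ≤ x) : lbd (fun x => (1 + x)⁻¹) x = -(1 + x)⁻¹ := by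
  unfold lbd
  have h1 : HasDerivAt (fun y : ℝ => 1 + y) 1 x := (hasDerivAt_id x).const_add 1
  have hne : (1 + x) ≠ 0 := by positivity
  have h2 := ((h1.log hne).neg).hasDerivWithinAt (s := Set.Ici 0)
  have h3 := h2.derivWithin (uniqueDiffOn_Ici (0 : ℝ) x hx)
  simp only [Real.log_inv]
  have h4 : (fun y : ℝ => -Real.log (1 + y)) = -(fun y : ℝ => Real.log (1 + y)) := rfl
  rw [h4, h3, one_div]

lemma kernel_contDiff (i j : Fin 4) :
    ContDiff ℝ 1 (fun Y : Fin 4 → EuclideanSpace ℝ (Fin 2) => (1 + ‖Y i - Y j‖ ^ 2)⁻¹) := by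
  apply ContDiff.inv
  · apply contDiff_const.add
    exact ContDiff.norm_sq ℝ ((contDiff_apply ℝ _ i).sub (contDiff_apply ℝ _ j))
  · intro Y
    positivity

lemma pairZ_pos (Y : Fin 4 → EuclideanSpace ℝ (Fin 2)) :
    0 < pairZ (fun x => (1 + x)⁻¹) Y := by
  unfold pairZ
  have h : ∀ k l : Fin 4, 0 ≤ (if k ≠ l then (1 + ‖Y k - Y l‖ ^ 2)⁻¹ else 0) := by
    intro k l
    split_ifs <;> positivity
  refine Finset.sum_pos' (fun k _ => Finset.sum_nonneg (fun l _ => h k l)) ⟨0, Finset.mem_univ _, ?_⟩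
  refine Finset.sum_pos' (fun l _ => h 0 l) ⟨1, Finset.mem_univ _, ?_⟩
  rw [if_pos (by decide)]
  positivity

lemma flowField_contDiff (p : Fin 4 → Fin 4 → ℝ) : ContDiff ℝ 1 (flowField p) := by
  rw [contDiff_pi]
  intro i
  unfold flowField
  apply ContDiff.sum
  intro j _
  apply ContDiff.fun_smul
  · apply ContDiff.mul
    · apply contDiff_const.mul
      apply contDiff_const.sub
      unfold qfun
      apply ContDiff.div (kernel_contDiff i j)
      · unfold pairZ
        apply ContDiff.sum
        intro k _
        apply ContDiff.sum
        intro l _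
        split_ifs
        · exact kernel_contDiff k l
        · exact contDiff_const
      · intro Y
        exact (pairZ_pos Y).ne'
    · exact (kernel_contDiff i j).neg
  · exact (contDiff_apply ℝ _ i).sub (contDiff_apply ℝ _ j)

lemma isGradFlow_iff (p : Fin 4 → Fin 4 → ℝ) (Y : ℝ → Fin 4 → EuclideanSpace ℝ (Fin 2)) :
    IsGradFlow (fun x => (1 + x)⁻¹) p Y ↔
      ∀ t ∈ Set.Ici (0 : ℝ), HasDerivWithinAt Y (flowField p (Y t)) (Set.Ici 0) t := by
  unfold IsGradFlow
  simp only [hasDerivWithinAt_pi]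
  have : ∀ i t, (∑ j ∈ Finset.univ.filter (· ≠ i),
        (4 * (p i j - qfun (fun x => (1 + x)⁻¹) (Y t) i j) *
          lbd (fun x => (1 + x)⁻¹) (‖Y t i - Y t j‖ ^ 2)) • (Y t i - Y t j))
        = flowField p (Y t) i := by
    intro i t
    unfold flowField
    refine Finset.sum_congr rfl (fun j _ => ?_)
    rw [lbd_kernel _ (by positivity)]
  simp only [this]
  exact ⟨fun h t ht i => h i t ht, fun h i t ht => h t ht i⟩

/-- Uniqueness for the gradient flow. -/
lemma flow_unique (p : Fin 4 → Fin 4 → ℝ) (Y W : ℝ → Fin 4 → EuclideanSpace ℝ (Fin 2))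
    (hY : ∀ t ∈ Set.Ici (0 : ℝ), HasDerivWithinAt Y (flowField p (Y t)) (Set.Ici 0) t)
    (hW : ∀ t ∈ Set.Ici (0 : ℝ), HasDerivWithinAt W (flowField p (W t)) (Set.Ici 0) t)
    (h0 : Y 0 = W 0) (t : ℝ) (ht : 0 ≤ t) : Y t = W t := by
  have cY : ContinuousOn Y (Set.Icc 0 t) :=
    fun u hu => ((hY u hu.1).continuousWithinAt).mono Set.Icc_subset_Ici_self
  have cW : ContinuousOn W (Set.Icc 0 t) :=
    fun u hu => ((hW u hu.1).continuousWithinAt).mono Set.Icc_subset_Ici_self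
  have hb : Bornology.IsBounded (Y '' Set.Icc 0 t ∪ W '' Set.Icc 0 t) :=
    ((isCompact_Icc.image_of_continuousOn cY).union
      (isCompact_Icc.image_of_continuousOn cW)).isBounded
  obtain ⟨R, hR⟩ := hb.subset_closedBall 0
  obtain ⟨K, hK⟩ := (flowField_contDiff p).contDiffOn.exists_lipschitzOnWith (s := Metric.closedBall 0 R)
    one_ne_zero (convex_closedBall _ _) (isCompact_closedBall _ _)
  refine ODE_solution_unique_of_mem_Icc_right (v := fun _ => flowField p)
    (s := fun _ => Metric.closedBall 0 R) (K := K) (fun _ _ => hK) cY ?_ ?_ cW ?_ ?_ h0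
    (Set.right_mem_Icc.2 ht)
  · exact fun u hu => (hY u hu.1).mono (Set.Ici_subset_Ici.2 hu.1)
  · exact fun u hu => hR (Or.inl ⟨u, Set.Ico_subset_Icc_self hu, rfl⟩)
  · exact fun u hu => (hW u hu.1).mono (Set.Ici_subset_Ici.2 hu.1)
  · exact fun u hu => hR (Or.inr ⟨u, Set.Ico_subset_Icc_self hu, rfl⟩)

/-- Rotation by a right angle. -/
noncomputable def rotJ : EuclideanSpace ℝ (Fin 2) →ₗᵢ[ℝ] EuclideanSpace ℝ (Fin 2) where
  toFun v := !₂[-v 1, v 0]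
  map_add' v w := by
    ext i
    fin_cases i <;> simp
    ring
  map_smul' c v := by
    ext i
    fin_cases i <;> simp
  norm_map' v := by
    simp [EuclideanSpace.norm_eq, Fin.sum_univ_two, add_comm]

lemma rotJ_rotJ (v : EuclideanSpace ℝ (Fin 2)) : rotJ (rotJ v) = -v := by
  ext i
  fin_cases i <;> simp [rotJ]

lemma flow_symm (p : Fin 4 → Fin 4 → ℝ) (σ : Equiv.Perm (Fin 4))
    (hσ : ∀ i j, i ≠ j → p (σ i) (σ j) = p i j)
    (A : EuclideanSpace ℝ (Fin 2) →ₗᵢ[ℝ] EuclideanSpace ℝ (Fin 2))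
    (Y : Fin 4 → EuclideanSpace ℝ (Fin 2)) (i : Fin 4) :
    flowField p (fun i => A (Y (σ i))) i = A (flowField p Y (σ i)) := by
  have hn : ∀ k l, ‖A (Y k) - A (Y l)‖ = ‖Y k - Y l‖ := by
    intro k l
    rw [← map_sub, A.norm_map]
  have hZ : pairZ (fun x => (1 + x)⁻¹) (fun i => A (Y (σ i))) = pairZ (fun x => (1 + x)⁻¹) Y := by
    unfold pairZ
    simp only [hn]
    refine Fintype.sum_equiv σ _ _ (fun k => ?_)
    refine Fintype.sum_equiv σ _ _ (fun l => ?_)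
    simp
  unfold flowField
  rw [map_sum]
  simp only [Finset.sum_filter]
  refine Fintype.sum_equiv σ _ _ (fun j => ?_)
  by_cases hij : j = i
  · simp [hij]
  · have hij' : i ≠ j := fun h => hij h.symm
    simp only [qfun, hZ, hn, hσ i j hij', map_smul, map_sub, ne_eq, EmbeddingLike.apply_eq_iff_eq,
      hij, not_false_eq_true, if_true]

/-- The field on a square configuration. -/
lemma flowField_square (a : ℝ) (p : Fin 4 → Fin 4 → ℝ)
    (hp12 : p 0 1 = a) (hp14 : p 0 3 = a) (hp13 : p 0 2 = (1 - 8 * a) / 4)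
    (Y : Fin 4 → EuclideanSpace ℝ (Fin 2))
    (h1 : Y 1 = rotJ (Y 0)) (h2 : Y 2 = -Y 0) (h3 : Y 3 = -rotJ (Y 0)) :
    flowField p Y 0 = (8 * (a - (1 + 4 * ‖Y 0‖ ^ 2) / (12 + 40 * ‖Y 0‖ ^ 2)) /
      ((1 + 2 * ‖Y 0‖ ^ 2) * (1 + 4 * ‖Y 0‖ ^ 2))) • Y 0 := by
  have n1 : ∀ v : EuclideanSpace ℝ (Fin 2), ‖v - rotJ v‖ ^ 2 = 2 * ‖v‖ ^ 2 := by
    intro v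
    simp [EuclideanSpace.norm_sq_eq, Fin.sum_univ_two, rotJ]
    ring
  have n2 : ∀ v : EuclideanSpace ℝ (Fin 2), ‖v + rotJ v‖ ^ 2 = 2 * ‖v‖ ^ 2 := by
    intro v
    simp [EuclideanSpace.norm_sq_eq, Fin.sum_univ_two, rotJ]
    ring
  have n3 : ∀ v : EuclideanSpace ℝ (Fin 2), ‖v + v‖ ^ 2 = 4 * ‖v‖ ^ 2 := by
    intro v
    simp [EuclideanSpace.norm_sq_eq, Fin.sum_univ_two]
    ring
  have key : ∀ k l : Fin 4, ‖Y k - Y l‖ ^ 2 = ‖Y l - Y k‖ ^ 2 := by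
    intro k l
    rw [norm_sub_rev]
  have d01 : ‖Y 0 - Y 1‖ ^ 2 = 2 * ‖Y 0‖ ^ 2 := by rw [h1, n1]
  have d02 : ‖Y 0 - Y 2‖ ^ 2 = 4 * ‖Y 0‖ ^ 2 := by rw [h2, sub_neg_eq_add, n3]
  have d03 : ‖Y 0 - Y 3‖ ^ 2 = 2 * ‖Y 0‖ ^ 2 := by rw [h3, sub_neg_eq_add, n2]
  have d12 : ‖Y 1 - Y 2‖ ^ 2 = 2 * ‖Y 0‖ ^ 2 := by rw [h1, h2, sub_neg_eq_add, add_comm, n2]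
  have d13 : ‖Y 1 - Y 3‖ ^ 2 = 4 * ‖Y 0‖ ^ 2 := by
    rw [h1, h3, sub_neg_eq_add, n3, rotJ.norm_map]
  have d23 : ‖Y 2 - Y 3‖ ^ 2 = 2 * ‖Y 0‖ ^ 2 := by
    rw [h2, h3, neg_sub_neg, norm_sub_rev, n1]
  have hZ : pairZ (fun x => (1 + x)⁻¹) Y
      = 8 * (1 + 2 * ‖Y 0‖ ^ 2)⁻¹ + 4 * (1 + 4 * ‖Y 0‖ ^ 2)⁻¹ := by
    unfold pairZ
    simp only [Fin.sum_univ_four]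
    simp [key 1 0, key 2 0, key 3 0, key 2 1, key 3 1, key 3 2, d01, d02, d03, d12, d13, d23]
    ring
  unfold flowField
  simp only [Finset.sum_filter, Fin.sum_univ_four]
  simp [qfun, hZ, d01, d02, d03, hp12, hp13, hp14]
  rw [h1, h2, h3]
  have hu : 0 ≤ ‖Y 0‖ ^ 2 := by positivity
  generalize ‖Y 0‖ ^ 2 = u at *
  generalize rotJ (Y 0) = w at *
  generalize Y 0 = v at *
  have e1 : (1 + 2 * u) ≠ 0 := by positivity
  have e2 : (1 + 4 * u) ≠ 0 := by positivity
  have e3 : (12 + 40 * u) ≠ 0 := by positivity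
  have q1 : (1 + 2 * u)⁻¹ / (8 * (1 + 2 * u)⁻¹ + 4 * (1 + 4 * u)⁻¹)
      = (1 + 4 * u) / (12 + 40 * u) := by
    have e4 : 8 * (1 + 2 * u)⁻¹ + 4 * (1 + 4 * u)⁻¹ ≠ 0 := by positivity
    rw [div_eq_div_iff e4 e3]
    field_simp
    ring
  have q2 : (1 + 4 * u)⁻¹ / (8 * (1 + 2 * u)⁻¹ + 4 * (1 + 4 * u)⁻¹)
      = (1 + 2 * u) / (12 + 40 * u) := by
    have e4 : 8 * (1 + 2 * u)⁻¹ + 4 * (1 + 4 * u)⁻¹ ≠ 0 := by positivity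
    rw [div_eq_div_iff e4 e3]
    field_simp
    ring
  rw [q1, q2]
  match_scalars
  · field_simp
    ring
  · ring

/-- **Example 4.2.** For `n = 4` points in `ℝ²` with `β(x) = (1+x)⁻¹`, weights
`p_{12} = p_{23} = p_{34} = p_{14} = a` and `p_{13} = p_{24} = (1-8a)/4` with
`a ∈ (1/10, 1/8)`, and initial data on the coordinate axes at distance `X₀ > 0` from the
origin, the gradient flow satisfies `diam Y(t) ≥ c t^{1/4}` for all `t ≥ 0`. -/
theorem four_points_divergence_example
    (β : ℝ → ℝ) (hβ : β = fun x => (1 + x)⁻¹)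
    (a : ℝ) (ha₁ : 1 / 10 < a) (ha₂ : a < 1 / 8)
    (p : Fin 4 → Fin 4 → ℝ)
    (hsymm : ∀ i j, p i j = p j i)
    (hp12 : p 0 1 = a) (hp23 : p 1 2 = a) (hp34 : p 2 3 = a) (hp14 : p 0 3 = a)
    (hp13 : p 0 2 = (1 - 8 * a) / 4) (hp24 : p 1 3 = (1 - 8 * a) / 4)
    (X₀ : ℝ) (hX₀ : 0 < X₀)
    (Y : ℝ → Fin 4 → EuclideanSpace ℝ (Fin 2))
    (hflow : IsGradFlow β p Y)
    (hY0 : Y 0 0 = ![X₀, 0] ∧ Y 0 1 = ![0, X₀] ∧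
           Y 0 2 = ![-X₀, 0] ∧ Y 0 3 = ![0, -X₀]) :
    ∃ c : ℝ, 0 < c ∧ ∀ t : ℝ, 0 ≤ t → c * t ^ ((1 : ℝ) / 4) ≤ diamY (Y t) := by
  subst hβ
  have hY := (isGradFlow_iff p Y).1 hflow
  obtain ⟨i0, i1, i2, i3⟩ := hY0
  -- the rotated solution
  let σ : Equiv.Perm (Fin 4) := Equiv.subRight 1
  have hσ : ∀ i j, i ≠ j → p (σ i) (σ j) = p i j := by
    have h10 := (hsymm 1 0).trans hp12
    have h20 := (hsymm 2 0).trans hp13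
    have h30 := (hsymm 3 0).trans hp14
    have h21 := (hsymm 2 1).trans hp23
    have h31 := (hsymm 3 1).trans hp24
    have h32 := (hsymm 3 2).trans hp34
    have s0 : σ 0 = 3 := rfl
    have s1 : σ 1 = 0 := rfl
    have s2 : σ 2 = 1 := rfl
    have s3 : σ 3 = 2 := rfl
    intro i j hij
    clear_value σ
    clear hsymm
    fin_cases i <;> fin_cases j <;>
      first
      | exact absurd rfl hij
      | simp [s0, s1, s2, s3, h10, h20, h30, h21, h31, h32, hp12, hp13, hp14, hp23, hp24, hp34]
  let W : ℝ → Fin 4 → EuclideanSpace ℝ (Fin 2) := fun t i => rotJ (Y t (σ i))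
  have hW : ∀ t ∈ Set.Ici (0 : ℝ), HasDerivWithinAt W (flowField p (W t)) (Set.Ici 0) t := by
    intro t ht
    rw [hasDerivWithinAt_pi]
    intro i
    have h1 := (hasDerivWithinAt_pi.1 (hY t ht)) (σ i)
    have h2 := rotJ.toContinuousLinearMap.hasFDerivAt.comp_hasDerivWithinAt t h1
    have h3 : flowField p (W t) i = rotJ (flowField p (Y t) (σ i)) :=
      flow_symm p σ hσ rotJ (Y t) i
    rw [h3]
    exact h2
  have h0 : Y 0 = W 0 := by
    funext i
    have s0 : σ 0 = 3 := rfl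
    have s1 : σ 1 = 0 := rfl
    have s2 : σ 2 = 1 := rfl
    have s3 : σ 3 = 2 := rfl
    ext j
    fin_cases i <;> fin_cases j <;> simp [W, s0, s1, s2, s3, rotJ, i0, i1, i2, i3]
  have hYW := flow_unique p Y W hY hW h0
  have r1 : ∀ t, 0 ≤ t → Y t 1 = rotJ (Y t 0) := fun t ht => congrFun (hYW t ht) 1
  have r2 : ∀ t, 0 ≤ t → Y t 2 = -Y t 0 := fun t ht => by
    have h : Y t 2 = rotJ (Y t 1) := congrFun (hYW t ht) 2
    rw [h, r1 t ht, rotJ_rotJ]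
  have r3 : ∀ t, 0 ≤ t → Y t 3 = -rotJ (Y t 0) := fun t ht => by
    have h : Y t 3 = rotJ (Y t 2) := congrFun (hYW t ht) 3
    rw [h, r2 t ht, map_neg]
  -- the scalar equation
  let u : ℝ → ℝ := fun t => ‖Y t 0‖ ^ 2
  let g : ℝ → ℝ := fun u => 16 * (a - (1 + 4 * u) / (12 + 40 * u)) /
      ((1 + 2 * u) * (1 + 4 * u)) * u
  have hu_nonneg : ∀ t, 0 ≤ u t := fun t => by positivity
  have hder : ∀ t ∈ Set.Ici (0 : ℝ), HasDerivWithinAt u (g (u t)) (Set.Ici 0) t := by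
    intro t ht
    have h1 := ((hasDerivWithinAt_pi.1 (hY t ht)) 0).norm_sq
    rw [flowField_square a p hp12 hp14 hp13 (Y t) (r1 t ht) (r2 t ht) (r3 t ht),
      real_inner_smul_right, real_inner_self_eq_norm_sq] at h1
    convert h1 using 1
    simp only [g, u]
    ring
  have hglow : ∀ x, 0 ≤ x → 16 * (a - 1 / 10) / ((1 + 2 * x) * (1 + 4 * x)) * x ≤ g x := by
    intro x hx
    simp only [g]
    have : (1 + 4 * x) / (12 + 40 * x) ≤ 1 / 10 := by
      rw [div_le_div_iff₀ (by positivity) (by positivity)]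
      linarith
    gcongr
  have hδ : 0 < a - 1 / 10 := by linarith
  have hg0 : ∀ x, 0 ≤ x → 0 ≤ g x := fun x hx => le_trans (by positivity) (hglow x hx)
  have hmono : MonotoneOn u (Set.Ici 0) := by
    refine monotoneOn_of_hasDerivWithinAt_nonneg (f' := fun t => g (u t)) (convex_Ici 0)
      (fun t ht => (hder t ht).continuousWithinAt) ?_ ?_
    · intro t ht
      exact (hder t (interior_subset ht)).mono interior_subset
    · intro t _
      exact hg0 _ (hu_nonneg t)
  have hu0 : u 0 = X₀ ^ 2 := by
    simp [u, EuclideanSpace.norm_sq_eq, Fin.sum_univ_two, i0]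
  have hu0pos : 0 < u 0 := by rw [hu0]; positivity
  set κ : ℝ := 32 * (a - 1 / 10) * (u 0 ^ 2 / ((1 + 2 * u 0) * (1 + 4 * u 0))) with hκ
  have hκpos : 0 < κ := by positivity
  have hsq : ∀ x, u 0 ≤ x → κ ≤ 2 * x * g x := by
    intro x hx
    have hxp : 0 < x := lt_of_lt_of_le hu0pos hx
    have h1 : u 0 ^ 2 / ((1 + 2 * u 0) * (1 + 4 * u 0)) ≤ x ^ 2 / ((1 + 2 * x) * (1 + 4 * x)) := by
      rw [div_le_div_iff₀ (by positivity) (by positivity)]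
      generalize u 0 = v at *
      nlinarith [mul_nonneg (mul_pos hu0pos hxp).le (sub_nonneg.2 hx),
        mul_nonneg (sub_nonneg.2 hx) (add_pos hu0pos hxp).le]
    calc κ ≤ 32 * (a - 1 / 10) * (x ^ 2 / ((1 + 2 * x) * (1 + 4 * x))) := by
          rw [hκ]; gcongr
      _ = 2 * x * (16 * (a - 1 / 10) / ((1 + 2 * x) * (1 + 4 * x)) * x) := by ring
      _ ≤ 2 * x * g x := by
          gcongr
          exact hglow x hxp.le
  have hmono2 : MonotoneOn (fun t => u t ^ 2 - κ * t) (Set.Ici 0) := by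
    have hd : ∀ t ∈ Set.Ici (0 : ℝ), HasDerivWithinAt (fun t => u t ^ 2 - κ * t)
        (2 * u t * g (u t) - κ) (Set.Ici 0) t := by
      intro t ht
      have h1 := ((hder t ht).pow 2).sub ((hasDerivWithinAt_id t (Set.Ici 0)).const_mul κ)
      have e : 2 * u t * g (u t) - κ = ((2 : ℕ) : ℝ) * u t ^ (2 - 1) * g (u t) - κ * 1 := by
        norm_num
      rw [e]
      exact h1
    refine monotoneOn_of_hasDerivWithinAt_nonneg (f' := fun t => 2 * u t * g (u t) - κ)
      (convex_Ici 0) (fun t ht => (hd t ht).continuousWithinAt) ?_ ?_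
    · intro t ht
      exact (hd t (interior_subset ht)).mono interior_subset
    · intro t ht
      have ht' : t ∈ Set.Ici (0 : ℝ) := interior_subset ht
      have := hsq (u t) (hmono (Set.mem_Ici.2 le_rfl) ht' ht')
      linarith
  refine ⟨κ ^ ((1 : ℝ) / 4), by positivity, fun t ht => ?_⟩
  have hfin : κ * t ≤ ‖Y t 0‖ ^ 4 := by
    have h1 := hmono2 (Set.mem_Ici.2 le_rfl) (Set.mem_Ici.2 ht) ht
    have h2 : u t ^ 2 = ‖Y t 0‖ ^ 4 := by simp only [u]; ring
    have h3 : 0 ≤ u 0 ^ 2 := by positivity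
    simp only [mul_zero, sub_zero] at h1
    linarith
  have hn : κ ^ ((1 : ℝ) / 4) * t ^ ((1 : ℝ) / 4) ≤ ‖Y t 0‖ := by
    rw [← Real.mul_rpow hκpos.le ht]
    calc (κ * t) ^ ((1 : ℝ) / 4) ≤ (‖Y t 0‖ ^ 4) ^ ((1 : ℝ) / 4) := by
          gcongr
      _ = ‖Y t 0‖ := by
          have := Real.pow_rpow_inv_natCast (norm_nonneg (Y t 0)) (n := 4) (by norm_num)
          rw [one_div]
          exact_mod_cast this
  have hd : dist (Y t 0) (Y t 2) ≤ diamY (Y t) :=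
    Metric.dist_le_diam_of_mem (Set.finite_range _).isBounded (Set.mem_range_self _)
      (Set.mem_range_self _)
  rw [r2 t ht, dist_eq_norm, sub_neg_eq_add, ← two_smul ℝ, norm_smul] at hd
  have := norm_nonneg (Y t 0)
  norm_num at hd
  linarith
end
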